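/- Von Neumann's inequality fails in three variables: there exist a finite-dimensional complex Hilbert space, three pairwise commuting linear operators T₁, T₂, T₃ on it with ‖T_r‖ ≤ 1 for r = 1,2,3, and a polynomial p(z₁,z₂,z₃) in three variables with complex coefficients, such that ‖p(T₁,T₂,T₃)‖ > sup_{|z₁| ≤ 1, |z₂| ≤ 1, |z₃| ≤ 1} |p(z₁,z₂,z₃)|. -/

import Mathlib

/-!
For a trilinear form `ε` on `ℂ^ι`, let `T_r` act on a space with basis `e, f_s, g_s, h` by
`T_r e = f_r`, `T_r f_s = ∑ u, ε r s u • g_u`, `T_r g_s = δ_rs • h` and `T_r h = 0`.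
Then `T_r T_s T_u` sends `e` to `ε s u r • h` and kills the rest of the basis; the `T_r` commute
when `ε` is symmetric, and they are contractions when the row and column sums of the matrices
`|ε r|` are at most `1`.

For the Crabb–Davie form, with `ε = -1` on equal indices, `1` on distinct indices and `0`
otherwise, the four monomials of `p = z₁z₂z₃ - z₁³ - z₂³ - z₃³` act on `e` with the same sign, so
`‖p(T)‖ ≥ 4`. On the polydisc `|p| = 4` would force `z₁z₂z₃ = -z₁³ = -z₂³ = -z₃³ ≠ 0`, and
multiplying the last three values gives `(z₁z₂z₃)³ = -(z₁z₂z₃)³`. Hence `|p| < 4` there, and by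
compactness the supremum is also below `4`.
-/

open MvPolynomial

/-- For pairwise commuting operators `T 0, T 1, T 2`, the operator `p(T₁, T₂, T₃)` obtained
by substituting them into a three-variable polynomial `p`. -/
noncomputable def polyEvalTriple {H : Type*} [NormedAddCommGroup H] [InnerProductSpace ℂ H]
    (p : MvPolynomial (Fin 3) ℂ) (T : Fin 3 → (H →L[ℂ] H)) : H →L[ℂ] H :=
  ∑ m ∈ p.support, MvPolynomial.coeff m p • (T 0 ^ m 0 * T 1 ^ m 1 * T 2 ^ m 2)

section PolyEvalTriple

variable {H : Type*} [NormedAddCommGroup H] [InnerProductSpace ℂ H]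

lemma polyEvalTriple_eq_sum (p : MvPolynomial (Fin 3) ℂ) (T : Fin 3 → (H →L[ℂ] H)) :
    polyEvalTriple p T =
      (AddMonoidAlgebra.coeff p).sum fun m a => a • (T 0 ^ m 0 * T 1 ^ m 1 * T 2 ^ m 2) := by
  rw [polyEvalTriple, sum_def]

lemma polyEvalTriple_sub (p q : MvPolynomial (Fin 3) ℂ) (T : Fin 3 → (H →L[ℂ] H)) :
    polyEvalTriple (p - q) T = polyEvalTriple p T - polyEvalTriple q T := by
  simp only [polyEvalTriple_eq_sum]
  exact Finsupp.sum_sub_index fun _ _ _ => sub_smul _ _ _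

lemma polyEvalTriple_monomial (m : Fin 3 →₀ ℕ) (a : ℂ) (T : Fin 3 → (H →L[ℂ] H)) :
    polyEvalTriple (monomial m a) T = a • (T 0 ^ m 0 * T 1 ^ m 1 * T 2 ^ m 2) := by
  rw [polyEvalTriple_eq_sum]
  exact sum_monomial_eq (zero_smul _ _)

end PolyEvalTriple

section Polydisc

variable {σ 𝕜 : Type*} [NormedCommRing 𝕜] [ProperSpace 𝕜]

lemma sSup_norm_eval_polydisc_lt {p : MvPolynomial σ 𝕜} {M : ℝ}
    (h : ∀ z : σ → 𝕜, (∀ r, ‖z r‖ ≤ 1) → ‖eval z p‖ < M) :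
    sSup {x : ℝ | ∃ z : σ → 𝕜, (∀ r, ‖z r‖ ≤ 1) ∧ x = ‖eval z p‖} < M := by
  let D : Set (σ → 𝕜) := {z | ∀ r, ‖z r‖ ≤ 1}
  have hD : IsCompact D := by
    simpa [D, Set.pi] using
      isCompact_univ_pi fun _ : σ => isCompact_closedBall (0 : 𝕜) 1
  have hD_nonempty : D.Nonempty := ⟨0, by simp [D]⟩
  have hcont : ContinuousOn (fun z => ‖eval z p‖) D := p.continuous_eval.norm.continuousOn
  have himage : {x : ℝ | ∃ z : σ → 𝕜, (∀ r, ‖z r‖ ≤ 1) ∧ x = ‖eval z p‖} =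
      (fun z => ‖eval z p‖) '' D := by
    ext x
    simp [D, eq_comm]
  rw [himage, hD.sSup_lt_iff_of_continuous hD_nonempty hcont]
  exact h

end Polydisc

section StrictConvex

variable {ι E : Type*} [NormedAddCommGroup E] [NormedSpace ℝ E] [StrictConvexSpace ℝ E]

lemma eq_of_add_le_norm_add {x y : E} {r : ℝ} (hx : ‖x‖ ≤ r) (hy : ‖y‖ ≤ r)
    (h : r + r ≤ ‖x + y‖) : x = y := by
  have hxy := norm_add_le x y
  exact eq_of_norm_eq_of_norm_add_eq (by linarith) (by linarith)

lemma eq_of_card_mul_le_norm_sum {s : Finset ι} {f : ι → E} {r : ℝ}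
    (hf : ∀ i ∈ s, ‖f i‖ ≤ r) (h : s.card * r ≤ ‖∑ i ∈ s, f i‖) {i j : ι}
    (hi : i ∈ s) (hj : j ∈ s) : f i = f j := by
  classical
  rcases eq_or_ne i j with rfl | hij
  · rfl
  have hj' : j ∈ s.erase i := Finset.mem_erase.mpr ⟨hij.symm, hj⟩
  set t := (s.erase i).erase j
  have hcard : t.card + 1 + 1 = s.card := by
    rw [Finset.card_erase_add_one hj', Finset.card_erase_add_one hi]
  have hsum : ∑ k ∈ s, f k = f i + f j + ∑ k ∈ t, f k := by
    rw [add_assoc, Finset.add_sum_erase _ _ hj', Finset.add_sum_erase _ _ hi]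
  have hrest : ‖∑ k ∈ t, f k‖ ≤ t.card * r := by
    refine (norm_sum_le_of_le t fun k hk => hf k ?_).trans_eq (by simp)
    exact Finset.mem_of_mem_erase (Finset.mem_of_mem_erase hk)
  refine eq_of_add_le_norm_add (hf i hi) (hf j hj) ?_
  rw [hsum, ← hcard] at h
  push_cast at h
  linarith [norm_add_le (f i + f j) (∑ k ∈ t, f k)]

end StrictConvex

section L2OpNorm

open scoped Matrix.Norms.L2Operator

variable {m n 𝕜 : Type*} [RCLike 𝕜] [Fintype n]

lemma norm_mulVec_apply_sq_le (A : Matrix m n 𝕜) (x : n → 𝕜) (i : m) :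
    ‖A.mulVec x i‖ ^ 2 ≤ (∑ j, ‖A i j‖) * ∑ j, ‖A i j‖ * ‖x j‖ ^ 2 := by
  calc ‖A.mulVec x i‖ ^ 2 ≤ (∑ j, ‖A i j‖ * ‖x j‖) ^ 2 := by
        gcongr
        exact (norm_sum_le _ _).trans_eq (by simp)
    _ ≤ (∑ j, ‖A i j‖) * ∑ j, ‖A i j‖ * ‖x j‖ ^ 2 :=
        Finset.sum_sq_le_sum_mul_sum_of_sq_le_mul _ (fun _ _ => by positivity)
          (fun _ _ => by positivity) fun _ _ => Eq.le (by ring)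

variable [Fintype m] [DecidableEq n]

lemma norm_apply_le_l2_opNorm (A : Matrix m n 𝕜) (i : m) (j : n) : ‖A i j‖ ≤ ‖A‖ := by
  calc ‖A i j‖ = ‖(EuclideanSpace.equiv m 𝕜).symm (A.mulVec (EuclideanSpace.single j 1)) i‖ := by
        simp
    _ ≤ ‖(EuclideanSpace.equiv m 𝕜).symm (A.mulVec (EuclideanSpace.single j 1))‖ :=
        PiLp.norm_apply_le _ i
    _ ≤ ‖A‖ * ‖EuclideanSpace.single j (1 : 𝕜)‖ := A.l2_opNorm_mulVec _
    _ = ‖A‖ := by simp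

/-- The **Schur test**. -/
lemma l2_opNorm_le_sqrt_of_sum_norm_le {A : Matrix m n 𝕜} {R C : ℝ} (hR : 0 ≤ R)
    (hrow : ∀ i, ∑ j, ‖A i j‖ ≤ R) (hcol : ∀ j, ∑ i, ‖A i j‖ ≤ C) : ‖A‖ ≤ √(R * C) := by
  refine ContinuousLinearMap.opNorm_le_bound _ (Real.sqrt_nonneg _) fun x => ?_
  rw [EuclideanSpace.norm_eq, EuclideanSpace.norm_eq x, ← Real.sqrt_mul' _ (by positivity)]
  apply Real.sqrt_le_sqrt
  calc ∑ i, ‖A.mulVec x i‖ ^ 2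
      ≤ ∑ i, R * ∑ j, ‖A i j‖ * ‖x j‖ ^ 2 := by
        gcongr with i
        exact (norm_mulVec_apply_sq_le A x i).trans (by gcongr; exact hrow i)
    _ = R * ∑ j, (∑ i, ‖A i j‖) * ‖x j‖ ^ 2 := by
        rw [← Finset.mul_sum, Finset.sum_comm]
        simp only [Finset.sum_mul]
    _ ≤ R * ∑ j, C * ‖x j‖ ^ 2 := by
        gcongr with j
        exact hcol j
    _ = R * C * ∑ j, ‖x j‖ ^ 2 := by
        rw [← Finset.mul_sum, mul_assoc]

end L2OpNorm

section ToEuclideanCLM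

open scoped Matrix.Norms.L2Operator

variable {m n : Type*} [Fintype m] [DecidableEq m] [Fintype n] (𝕜 : Type*) [RCLike 𝕜]

/-- Square matrices as operators on `EuclideanSpace 𝕜 n`, where `e` enumerates the indices of the
matrices by `n`; it places an operator written on a structured basis on the standard space. -/
noncomputable def toEuclideanCLMOfEquiv (e : m ≃ n) :
    Matrix m m 𝕜 ≃⋆ₐ[𝕜] (EuclideanSpace 𝕜 n →L[𝕜] EuclideanSpace 𝕜 n) :=
  Matrix.toEuclideanCLM.trans (LinearIsometryEquiv.piLpCongrLeft 2 𝕜 𝕜 e).conjStarAlgEquiv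

variable {𝕜}

lemma norm_toEuclideanCLMOfEquiv (e : m ≃ n) (A : Matrix m m 𝕜) :
    ‖toEuclideanCLMOfEquiv 𝕜 e A‖ = ‖A‖ := by
  let φ := LinearIsometryEquiv.piLpCongrLeft 2 𝕜 𝕜 e
  change ‖φ.toLinearIsometry.toContinuousLinearMap ∘L
    Matrix.toEuclideanCLM (𝕜 := 𝕜) A ∘L
      (φ.symm : EuclideanSpace 𝕜 n →L[𝕜] EuclideanSpace 𝕜 m)‖ = ‖A‖
  rw [LinearIsometry.norm_toContinuousLinearMap_comp,
    ContinuousLinearMap.opNorm_comp_linearIsometryEquiv, Matrix.l2_opNorm_toEuclideanCLM]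

end ToEuclideanCLM

/-- The matrix of the operator `T_r` attached to the trilinear form with coefficients `ε`, on the
basis `e, f_s, g_s, h` indexed in this order by `Unit ⊕ ι ⊕ ι ⊕ Unit`: `T_r e = f_r`,
`T_r f_s = ∑ u, ε r s u • g_u`, `T_r g_r = h`, and `T_r` kills `h` and the other `g_s`. -/
def trilinearShift {ι R : Type*} [DecidableEq ι] [Zero R] [One R] (ε : ι → ι → ι → R) (r : ι) :
    Matrix (Unit ⊕ ι ⊕ ι ⊕ Unit) (Unit ⊕ ι ⊕ ι ⊕ Unit) R :=
  Matrix.of fun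
    | .inr (.inl s), .inl _ => if s = r then 1 else 0
    | .inr (.inr (.inl u)), .inr (.inl s) => ε r s u
    | .inr (.inr (.inr _)), .inr (.inr (.inl s)) => if s = r then 1 else 0
    | _, _ => 0

section TrilinearShift

variable {ι R 𝕜 : Type*} [Fintype ι] [DecidableEq ι]

lemma trilinearShift_commute [NonAssocSemiring R] {ε : ι → ι → ι → R}
    (h₁₂ : ∀ r s u, ε r s u = ε s r u) (h₂₃ : ∀ r s u, ε r s u = ε r u s) (r s : ι) :
    Commute (trilinearShift ε r) (trilinearShift ε s) := by
  have h₁₃ (t : ι) : ε s t r = ε r t s := by rw [h₂₃, h₁₂, h₂₃]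
  ext i j
  rcases i with _ | _ | _ | _ <;> rcases j with _ | _ | _ | _ <;>
    simp [Matrix.mul_apply, trilinearShift, h₁₂ r s, h₁₃]

lemma trilinearShift_mul_mul [NonAssocSemiring R] (ε : ι → ι → ι → R) (r s u : ι) :
    trilinearShift ε r * trilinearShift ε s * trilinearShift ε u =
      Matrix.single (.inr (.inr (.inr ()))) (.inl ()) (ε s u r) := by
  ext i j
  rcases i with _ | _ | _ | _ <;> rcases j with _ | _ | _ | _ <;>
    simp [Matrix.mul_apply, trilinearShift]

open scoped Matrix.Norms.L2Operator in
lemma l2_opNorm_trilinearShift_le_one [RCLike 𝕜] {ε : ι → ι → ι → 𝕜} {r : ι}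
    (hrow : ∀ u, ∑ s, ‖ε r s u‖ ≤ 1) (hcol : ∀ s, ∑ u, ‖ε r s u‖ ≤ 1) :
    ‖trilinearShift ε r‖ ≤ 1 := by
  have norm_delta_le (s : ι) : ‖if s = r then (1 : 𝕜) else 0‖ ≤ 1 := by
    split_ifs <;> simp
  have sum_norm_delta : ∑ s, ‖if s = r then (1 : 𝕜) else 0‖ = 1 := by
    simp [apply_ite]
  refine (l2_opNorm_le_sqrt_of_sum_norm_le zero_le_one (C := 1) ?_ ?_).trans_eq (by simp)
  · rintro (_ | s | u | _) <;> simp [trilinearShift, norm_delta_le, sum_norm_delta, hrow]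
  · rintro (_ | s | u | _) <;> simp [trilinearShift, norm_delta_le, sum_norm_delta, hcol]

end TrilinearShift

/-- The coefficients of the symmetric trilinear form behind the Crabb–Davie operators: `-1` on
triples of equal indices, `1` on triples of distinct indices, and `0` otherwise. -/
def crabbDavieCoeff (r s u : Fin 3) : ℂ :=
  if r = s ∧ s = u then -1 else if r ≠ s ∧ s ≠ u ∧ r ≠ u then 1 else 0

lemma crabbDavieCoeff_swap_left (r s u : Fin 3) :
    crabbDavieCoeff r s u = crabbDavieCoeff s r u := by
  fin_cases r <;> fin_cases s <;> fin_cases u <;> rfl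

lemma crabbDavieCoeff_swap_right (r s u : Fin 3) :
    crabbDavieCoeff r s u = crabbDavieCoeff r u s := by
  fin_cases r <;> fin_cases s <;> fin_cases u <;> rfl

lemma sum_norm_crabbDavieCoeff (r s : Fin 3) : ∑ u, ‖crabbDavieCoeff r s u‖ = 1 := by
  fin_cases r <;> fin_cases s <;> simp [crabbDavieCoeff, Fin.sum_univ_three]

/-- The Crabb–Davie polynomial `z₁z₂z₃ - z₁³ - z₂³ - z₃³`, for which the Crabb–Davie contractions
violate von Neumann's inequality; the variables are numbered from `0`. -/
noncomputable def crabbDaviePoly : MvPolynomial (Fin 3) ℂ :=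
  X 0 * X 1 * X 2 - X 0 ^ 3 - X 1 ^ 3 - X 2 ^ 3

lemma norm_mul_mul_sub_cubes_lt_four {x y z : ℂ} (hx : ‖x‖ ≤ 1) (hy : ‖y‖ ≤ 1) (hz : ‖z‖ ≤ 1) :
    ‖x * y * z - x ^ 3 - y ^ 3 - z ^ 3‖ < 4 := by
  by_contra! hnorm
  let f : Fin 4 → ℂ := ![x * y * z, -x ^ 3, -y ^ 3, -z ^ 3]
  have hf : ∀ i ∈ Finset.univ, ‖f i‖ ≤ 1 := by
    have hxyz : ‖x‖ * ‖y‖ * ‖z‖ ≤ 1 :=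
      mul_le_one₀ (mul_le_one₀ hx (norm_nonneg _) hy) (norm_nonneg _) hz
    simp [Fin.forall_fin_succ, f, pow_le_one₀, hx, hy, hz, hxyz]
  have hsum : ∑ i, f i = x * y * z - x ^ 3 - y ^ 3 - z ^ 3 := by
    simp [Fin.sum_univ_four, f, sub_eq_add_neg]
  have heq (i j : Fin 4) : f i = f j :=
    eq_of_card_mul_le_norm_sum hf (by simpa [hsum] using hnorm)
      (Finset.mem_univ i) (Finset.mem_univ j)
  have hx3 : -x ^ 3 = x * y * z := heq 1 0
  have hy3 : -y ^ 3 = x * y * z := heq 2 0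
  have hz3 : -z ^ 3 = x * y * z := heq 3 0
  have hcube : (x * y * z) ^ 3 = -(x * y * z) ^ 3 := by
    calc (x * y * z) ^ 3 = -((-x ^ 3) * (-y ^ 3) * (-z ^ 3)) := by ring
      _ = -(x * y * z) ^ 3 := by rw [hx3, hy3, hz3]; ring
  have hzero : x * y * z = 0 := by simpa using self_eq_neg.mp hcube
  have hvanish : x * y * z - x ^ 3 - y ^ 3 - z ^ 3 = 0 := by
    linear_combination hx3 + hy3 + hz3 + 4 * hzero
  norm_num [hvanish] at hnorm

lemma norm_eval_crabbDaviePoly_lt_four {z : Fin 3 → ℂ} (hz : ∀ r, ‖z r‖ ≤ 1) :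
    ‖eval z crabbDaviePoly‖ < 4 := by
  simpa [crabbDaviePoly] using norm_mul_mul_sub_cubes_lt_four (hz 0) (hz 1) (hz 2)

lemma polyEvalTriple_crabbDaviePoly {H : Type*} [NormedAddCommGroup H] [InnerProductSpace ℂ H]
    (T : Fin 3 → (H →L[ℂ] H)) :
    polyEvalTriple crabbDaviePoly T = T 0 * T 1 * T 2 - T 0 ^ 3 - T 1 ^ 3 - T 2 ^ 3 := by
  have hmonomial : (X 0 * X 1 * X 2 : MvPolynomial (Fin 3) ℂ) =
      monomial (Finsupp.single 0 1 + Finsupp.single 1 1 + Finsupp.single 2 1) 1 := by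
    simp [X, monomial_mul]
  simp only [crabbDaviePoly, hmonomial, X_pow_eq_monomial, polyEvalTriple_sub,
    polyEvalTriple_monomial]
  simp

/-- The three commuting Crabb–Davie contractions, as matrices on the `8`-element basis of
`trilinearShift`. -/
def crabbDavieMatrix :
    Fin 3 → Matrix (Unit ⊕ Fin 3 ⊕ Fin 3 ⊕ Unit) (Unit ⊕ Fin 3 ⊕ Fin 3 ⊕ Unit) ℂ :=
  trilinearShift crabbDavieCoeff

lemma crabbDavieMatrix_commute (r s : Fin 3) :
    Commute (crabbDavieMatrix r) (crabbDavieMatrix s) :=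
  trilinearShift_commute crabbDavieCoeff_swap_left crabbDavieCoeff_swap_right r s

open scoped Matrix.Norms.L2Operator in
lemma l2_opNorm_crabbDavieMatrix_le_one (r : Fin 3) : ‖crabbDavieMatrix r‖ ≤ 1 := by
  refine l2_opNorm_trilinearShift_le_one (fun u => ?_) fun s => (sum_norm_crabbDavieCoeff r s).le
  simpa only [crabbDavieCoeff_swap_right r u] using (sum_norm_crabbDavieCoeff r u).le

open scoped Matrix.Norms.L2Operator in
lemma four_le_l2_opNorm_crabbDavieMatrix :
    4 ≤ ‖crabbDavieMatrix 0 * crabbDavieMatrix 1 * crabbDavieMatrix 2 -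
      crabbDavieMatrix 0 ^ 3 - crabbDavieMatrix 1 ^ 3 - crabbDavieMatrix 2 ^ 3‖ := by
  have hdistinct : crabbDavieCoeff 1 2 0 = 1 := rfl
  have hequal (r) : crabbDavieCoeff r r r = -1 := if_pos ⟨rfl, rfl⟩
  refine le_trans ?_ (norm_apply_le_l2_opNorm _ (.inr (.inr (.inr ()))) (.inl ()))
  simp only [crabbDavieMatrix, pow_three', trilinearShift_mul_mul, Matrix.sub_apply,
    Matrix.single_apply_same, hdistinct, hequal]
  norm_num

/-- The Crabb–Davie contractions on the standard `8`-dimensional Hilbert space. -/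
noncomputable def crabbDavieOperator (r : Fin 3) :
    EuclideanSpace ℂ (Fin 8) →L[ℂ] EuclideanSpace ℂ (Fin 8) :=
  toEuclideanCLMOfEquiv ℂ (Fintype.equivFinOfCardEq rfl) (crabbDavieMatrix r)

lemma crabbDavieOperator_commute (r s : Fin 3) :
    Commute (crabbDavieOperator r) (crabbDavieOperator s) :=
  (crabbDavieMatrix_commute r s).map (toEuclideanCLMOfEquiv ℂ _)

lemma norm_crabbDavieOperator_le_one (r : Fin 3) : ‖crabbDavieOperator r‖ ≤ 1 :=
  (norm_toEuclideanCLMOfEquiv _ _).trans_le (l2_opNorm_crabbDavieMatrix_le_one r)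

lemma four_le_norm_polyEvalTriple_crabbDavieOperator :
    4 ≤ ‖polyEvalTriple crabbDaviePoly crabbDavieOperator‖ := by
  refine four_le_l2_opNorm_crabbDavieMatrix.trans_eq ?_
  rw [polyEvalTriple_crabbDaviePoly,
    ← norm_toEuclideanCLMOfEquiv (Fintype.equivFinOfCardEq (n := 8) rfl)]
  simp only [map_sub, map_mul, map_pow]
  rfl

/-- **Von Neumann's inequality fails in three variables.** There are a finite-dimensional
complex Hilbert space, three pairwise commuting contractions `T 0, T 1, T 2` on it, and a
three-variable polynomial `p`, with `‖p(T₁,T₂,T₃)‖ > sup_{|z₁|≤1,|z₂|≤1,|z₃|≤1} |p(z)|`. -/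
theorem von_neumann_fails_in_three_variables :
    ∃ (n : ℕ) (T : Fin 3 → (EuclideanSpace ℂ (Fin n) →L[ℂ] EuclideanSpace ℂ (Fin n)))
      (p : MvPolynomial (Fin 3) ℂ),
      (∀ r s : Fin 3, Commute (T r) (T s)) ∧
      (∀ r : Fin 3, ‖T r‖ ≤ 1) ∧
      sSup {x : ℝ | ∃ z : Fin 3 → ℂ, (∀ r, ‖z r‖ ≤ 1) ∧ x = ‖MvPolynomial.eval z p‖} <
        ‖polyEvalTriple p T‖ := by
  refine ⟨8, crabbDavieOperator, crabbDaviePoly, crabbDavieOperator_commute,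
    norm_crabbDavieOperator_le_one, ?_⟩
  calc
    _ < 4 := sSup_norm_eval_polydisc_lt fun _ => norm_eval_crabbDaviePoly_lt_four
    _ ≤ _ := four_le_norm_polyEvalTriple_crabbDavieOperator
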